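/- arXiv:1309.0228 — 3 statements merged into one kernel-verified Lean document; each statement's English description precedes it below -/
import Mathlib

section
/- Let L be a lattice with a least element ⊥ and let a ∈ L be an atom of L that is also a neutral element of L. Then an element x ∈ L is an upper-modular element of L if and only if x ⊔ a is an upper-modular element of L. -/
/-- An element `x` of a lattice `L` is neutral if for all `y, z ∈ L` one has
`(x ⊔ y) ⊓ (y ⊔ z) ⊓ (z ⊔ x) = (x ⊓ y) ⊔ (y ⊓ z) ⊔ (z ⊓ x)`. -/
def IsNeutralElement {L : Type*} [Lattice L] (x : L) : Prop :=
  ∀ y z : L, (x ⊔ y) ⊓ (y ⊔ z) ⊓ (z ⊔ x) = (x ⊓ y) ⊔ (y ⊓ z) ⊔ (z ⊓ x)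

def IsUpperModularElement {L : Type*} [Lattice L] (x : L) : Prop :=
  ∀ y z : L, y ≤ x → x ⊓ (y ⊔ z) = y ⊔ (x ⊓ z)

theorem neutral_mod_aux {L : Type*} [Lattice L] {a : L} (hn : IsNeutralElement a)
    (u w : L) (hu : u ≤ a) : a ⊓ (u ⊔ w) = u ⊔ (a ⊓ w) := by
  have h := hn u w
  apply le_antisymm
  · calc a ⊓ (u ⊔ w) ≤ (a ⊔ u) ⊓ (u ⊔ w) ⊓ (w ⊔ a) :=
          le_inf (inf_le_inf_right _ le_sup_left) (inf_le_left.trans le_sup_right)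
      _ = _ := h
      _ ≤ u ⊔ (a ⊓ w) := sup_le (sup_le (inf_le_right.trans le_sup_left)
          (inf_le_left.trans le_sup_left)) (by rw [inf_comm]; exact le_sup_right)
  · exact sup_le (le_inf hu le_sup_left) (inf_le_inf_left _ le_sup_right)

theorem neutral_mod_aux_dual {L : Type*} [Lattice L] {a : L} (hn : IsNeutralElement a)
    (u w : L) (hu : a ≤ u) : u ⊓ (a ⊔ w) ≤ a ⊔ (u ⊓ w) := by
  have h := hn u w
  calc u ⊓ (a ⊔ w) ≤ (a ⊔ u) ⊓ (u ⊔ w) ⊓ (w ⊔ a) :=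
        le_inf (le_inf (inf_le_left.trans le_sup_right) (inf_le_left.trans le_sup_left))
          (by rw [sup_comm w a]; exact inf_le_right)
    _ = _ := h
    _ ≤ a ⊔ (u ⊓ w) := sup_le (sup_le (inf_le_left.trans le_sup_left) le_sup_right)
        (inf_le_right.trans le_sup_left)

theorem neutral_inf_sup {L : Type*} [Lattice L] {a : L} (hn : IsNeutralElement a)
    (y z : L) : a ⊓ (y ⊔ z) = (a ⊓ y) ⊔ (a ⊓ z) := by
  apply le_antisymm
  · have h1 : a ⊓ (y ⊔ z) ≤ a ⊓ (((a ⊓ y) ⊔ (a ⊓ z)) ⊔ (y ⊓ z)) := by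
      refine le_inf inf_le_left ?_
      calc a ⊓ (y ⊔ z) ≤ (a ⊔ y) ⊓ (y ⊔ z) ⊓ (z ⊔ a) :=
            le_inf (inf_le_inf_right _ le_sup_left) (inf_le_left.trans le_sup_right)
        _ = _ := hn y z
        _ ≤ _ := sup_le (sup_le (le_sup_left.trans le_sup_left) le_sup_right)
            (by rw [inf_comm z a]; exact le_sup_right.trans le_sup_left)
    rw [neutral_mod_aux hn _ _ (sup_le inf_le_left inf_le_left)] at h1
    exact h1.trans (sup_le le_rfl ((inf_le_inf_left _ inf_le_left).trans le_sup_left))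
  · exact sup_le (inf_le_inf_left _ le_sup_left) (inf_le_inf_left _ le_sup_right)

theorem neutral_sup_inf {L : Type*} [Lattice L] {a : L} (hn : IsNeutralElement a)
    (y z : L) : a ⊔ (y ⊓ z) = (a ⊔ y) ⊓ (a ⊔ z) := by
  apply le_antisymm
  · exact le_inf (sup_le_sup_left inf_le_left _) (sup_le_sup_left inf_le_right _)
  · have h2 : (a ⊔ y) ⊓ (a ⊔ z) ≤ ((a ⊔ y) ⊓ (a ⊔ z)) ⊓ (a ⊔ (y ⊔ z)) :=
      le_inf le_rfl (inf_le_left.trans (sup_le_sup_left le_sup_left _))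
    refine (h2.trans (neutral_mod_aux_dual hn _ _ (le_inf le_sup_left le_sup_left))).trans ?_
    refine sup_le le_sup_left ?_
    calc (a ⊔ y) ⊓ (a ⊔ z) ⊓ (y ⊔ z) ≤ (a ⊔ y) ⊓ (y ⊔ z) ⊓ (z ⊔ a) :=
          le_inf (inf_le_inf_right _ inf_le_left)
            (by rw [sup_comm z a]; exact inf_le_left.trans inf_le_right)
      _ = _ := hn y z
      _ ≤ _ := sup_le (sup_le (inf_le_left.trans le_sup_left) le_sup_right)
          (inf_le_right.trans le_sup_left)

theorem neutral_cancel {L : Type*} [Lattice L] {a : L} (hn : IsNeutralElement a)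
    {y z : L} (h1 : a ⊓ y = a ⊓ z) (h2 : a ⊔ y = a ⊔ z) : y = z := by
  have hy : y ≤ a ⊔ z := h2 ▸ le_sup_right
  have hz : z ≤ a ⊔ y := h2 ▸ le_sup_right
  have hy' : a ⊓ z ≤ y := h1 ▸ inf_le_right
  have hz' : a ⊓ y ≤ z := h1 ▸ inf_le_right
  have key : y ⊔ z ≤ y ⊓ z := by
    calc y ⊔ z ≤ (a ⊔ y) ⊓ (y ⊔ z) ⊓ (z ⊔ a) :=
          le_inf (le_inf (sup_le le_sup_right hz) le_rfl)
            (sup_le (by rwa [sup_comm]) le_sup_left)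
      _ = _ := hn y z
      _ ≤ _ := sup_le (sup_le (le_inf inf_le_right hz') le_rfl)
          (le_inf (by rwa [inf_comm]) inf_le_left)
  exact le_antisymm ((le_sup_left.trans key).trans inf_le_right)
    ((le_sup_right.trans key).trans inf_le_left)

theorem upper_of_sup {L : Type*} [Lattice L] [OrderBot L] {a : L}
    (ha : IsAtom a) (hn : IsNeutralElement a) (x : L)
    (h : ∀ y z : L, y ≤ x → a ⊔ (x ⊓ (y ⊔ z)) = a ⊔ (y ⊔ (x ⊓ z))) :
    IsUpperModularElement x := by
  intro y z hy
  refine neutral_cancel hn ?_ (h y z hy)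
  rcases ha.le_iff.1 (inf_le_left : a ⊓ y ≤ a) with h0 | h0
  · rw [neutral_inf_sup hn y, h0, bot_sup_eq, inf_left_comm, neutral_inf_sup hn, h0,
      bot_sup_eq, inf_left_comm]
  · have hay : a ≤ y := inf_eq_left.1 h0
    rw [inf_eq_left.2 (le_inf (hay.trans hy) (hay.trans le_sup_left)),
      inf_eq_left.2 (hay.trans le_sup_left)]

/-- If `a` is an atom and a neutral element of a lattice `L` with least element, then
an element `x ∈ L` is a uppermodular element of `L` if and only if `x ⊔ a` is. -/
theorem isUpperModularElement_sup_atom_iff {L : Type*} [Lattice L] [OrderBot L] (a : L)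
    (ha : IsAtom a) (hn : IsNeutralElement a) (x : L) :
    IsUpperModularElement x ↔ IsUpperModularElement (x ⊔ a) := by
  constructor
  · intro h
    refine upper_of_sup ha hn _ fun y z hy => ?_
    have h1 := congrArg (a ⊔ ·) (h (y ⊓ x) z inf_le_right)
    have hy' : (a ⊔ y) ⊓ (a ⊔ x) = a ⊔ y :=
      inf_eq_left.2 (sup_le le_sup_left (by rwa [sup_comm]))
    have e : ∀ p q : L, a ⊔ (p ⊔ q) = (a ⊔ p) ⊔ (a ⊔ q) := fun p q => sup_sup_distrib_left a p q
    have e2 : a ⊔ (x ⊔ a) = a ⊔ x := by rw [sup_comm x a, ← sup_assoc, sup_idem]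
    simp only [neutral_sup_inf hn, e _ z, e _ (_ ⊓ z), hy'] at h1
    rw [neutral_sup_inf hn, e y, e y, neutral_sup_inf hn, e2]
    exact h1
  · intro h
    refine upper_of_sup ha hn _ fun y z hy => ?_
    have h1 := congrArg (a ⊔ ·) (h y z (hy.trans le_sup_left))
    have e : ∀ q : L, a ⊔ (y ⊔ q) = (a ⊔ y) ⊔ (a ⊔ q) := fun q => sup_sup_distrib_left a y q
    have e2 : a ⊔ (x ⊔ a) = a ⊔ x := by rw [sup_comm x a, ← sup_assoc, sup_idem]
    simp only [neutral_sup_inf hn, e, e2] at h1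
    rw [neutral_sup_inf hn, e, e, neutral_sup_inf hn]
    exact h1
end

section
/- Let L be a lattice with a least element ⊥ and let a ∈ L be an atom of L that is also a neutral element of L. Then an element x ∈ L is a codistributive element of L if and only if x ⊔ a is a codistributive element of L. -/
def IsCodistributiveElement {L : Type*} [Lattice L] (x : L) : Prop :=
  ∀ y z : L, x ⊓ (y ⊔ z) = (x ⊓ y) ⊔ (x ⊓ z)

theorem neu_sup {L : Type*} [Lattice L] {a : L} (hn : IsNeutralElement a) (y z : L) :
    (y ⊓ z) ⊔ a = (y ⊔ a) ⊓ (z ⊔ a) := by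
  apply le_antisymm
  · exact sup_le (inf_le_inf le_sup_left le_sup_left) (le_inf le_sup_right le_sup_right)
  have h1 := hn (y ⊔ z) ((a ⊔ y) ⊓ (z ⊔ a))
  have h2 := hn y z
  have hp : a ≤ (a ⊔ y) ⊓ (z ⊔ a) := le_inf le_sup_left le_sup_right
  have h3 : (y ⊔ z) ⊓ ((a ⊔ y) ⊓ (z ⊔ a)) = (a ⊓ y) ⊔ (y ⊓ z) ⊔ (z ⊓ a) := by
    rw [← h2]; ac_rfl
  have hl : (a ⊔ y) ⊓ (z ⊔ a) ≤ a ⊔ (y ⊔ z) :=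
    inf_le_left.trans (sup_le_sup_left le_sup_left _)
  have h4 : (y ⊔ a) ⊓ (z ⊔ a) ≤ a ⊓ (y ⊔ z) ⊔ ((y ⊔ z) ⊓ ((a ⊔ y) ⊓ (z ⊔ a)))
      ⊔ ((a ⊔ y) ⊓ (z ⊔ a)) ⊓ a := by
    rw [← h1, sup_comm y a]
    exact le_inf (le_inf hl le_sup_right) le_sup_left
  refine h4.trans ?_
  rw [h3]
  refine sup_le (sup_le (inf_le_left.trans le_sup_right) (sup_le (sup_le ?_ le_sup_left) ?_))
    (inf_le_right.trans le_sup_right)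
  · exact inf_le_left.trans le_sup_right
  · exact inf_le_right.trans le_sup_right

theorem neu_dual {L : Type*} [Lattice L] {a : L} (hn : IsNeutralElement a) :
    IsNeutralElement (OrderDual.toDual a) := fun y z =>
  (hn (OrderDual.ofDual y) (OrderDual.ofDual z)).symm

theorem neu_inf {L : Type*} [Lattice L] {a : L} (hn : IsNeutralElement a) (y z : L) :
    (y ⊔ z) ⊓ a = (y ⊓ a) ⊔ (z ⊓ a) :=
  neu_sup (neu_dual hn) (OrderDual.toDual y) (OrderDual.toDual z)

theorem neu_inj {L : Type*} [Lattice L] {a : L} (hn : IsNeutralElement a) {y z : L}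
    (h1 : y ⊓ a = z ⊓ a) (h2 : y ⊔ a = z ⊔ a) : y = z := by
  have h := hn y z
  have e1 : y ⊔ z ≤ (a ⊔ y) ⊓ (y ⊔ z) ⊓ (z ⊔ a) := by
    have : y ⊔ z ≤ z ⊔ a := sup_le (h2 ▸ le_sup_left) le_sup_left
    refine le_inf (le_inf ?_ le_rfl) this
    rwa [sup_comm a y, h2]
  have e2 : (a ⊓ y) ⊔ (y ⊓ z) ⊔ (z ⊓ a) ≤ y ⊓ z := by
    have : z ⊓ a ≤ y ⊓ z := le_inf (h1 ▸ inf_le_left) inf_le_left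
    refine sup_le (sup_le ?_ le_rfl) this
    rwa [inf_comm a y, h1]
  have e : y ⊔ z ≤ y ⊓ z := e1.trans (h.le.trans e2)
  exact le_antisymm (le_sup_left.trans (e.trans inf_le_right))
    (le_sup_right.trans (e.trans inf_le_left))

theorem codist_iff {L : Type*} [Lattice L] [OrderBot L] {a : L}
    (ha : IsAtom a) (hn : IsNeutralElement a) (x : L) :
    IsCodistributiveElement x ↔
      ∀ y z : L, (x ⊔ a) ⊓ (y ⊔ z ⊔ a) = ((x ⊔ a) ⊓ (y ⊔ a)) ⊔ ((x ⊔ a) ⊓ (z ⊔ a)) := by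
  have key : ∀ y z : L, ((x ⊓ y) ⊔ (x ⊓ z)) ⊔ a
      = ((x ⊔ a) ⊓ (y ⊔ a)) ⊔ ((x ⊔ a) ⊓ (z ⊔ a)) := by
    intro y z
    rw [← neu_sup hn, ← neu_sup hn, sup_sup_sup_comm, sup_idem]
  constructor
  · intro h y z
    rw [← key, ← h, neu_sup hn]
  · intro h y z
    apply neu_inj hn
    · apply le_antisymm
      · have : x ⊓ (y ⊔ z) ⊓ a = (x ⊓ a) ⊓ ((y ⊓ a) ⊔ (z ⊓ a)) := by
          rw [← neu_inf hn, inf_inf_inf_comm, inf_idem]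
        rw [this, neu_inf hn]
        rcases ha.le_iff.1 (inf_le_right : x ⊓ a ≤ a) with hx | hx
        · rw [hx, bot_inf_eq]; exact bot_le
        · have hax : a ≤ x := inf_eq_right.1 hx
          exact inf_le_right.trans (sup_le_sup
            (inf_le_inf_right _ le_rfl |>.trans (le_inf (le_inf (inf_le_right.trans hax) inf_le_left) inf_le_right))
            (le_inf (le_inf (inf_le_right.trans hax) inf_le_left) inf_le_right))
      · exact inf_le_inf_right _ (le_inf (sup_le inf_le_left inf_le_left)
          (sup_le_sup inf_le_right inf_le_right))
    · rw [key, ← h, neu_sup hn]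

/-- If `a` is an atom and a neutral element of a lattice `L` with least element, then
an element `x ∈ L` is a codistributive element of `L` if and only if `x ⊔ a` is. -/
theorem isCodistributiveElement_sup_atom_iff {L : Type*} [Lattice L] [OrderBot L] (a : L)
    (ha : IsAtom a) (hn : IsNeutralElement a) (x : L) :
    IsCodistributiveElement x ↔ IsCodistributiveElement (x ⊔ a) := by
  rw [codist_iff ha hn x, codist_iff ha hn (x ⊔ a), sup_assoc, sup_idem]
end

section
/- Let G be a group acting on a set A such that the action is not transitive and the stabilizers of any two points of A coincide (for all x, y ∈ A, Stab(x) = Stab(y)). Then a congruence α on the G-set A is a costandard element of the congruence lattice Con(A) if and only if α is the equality relation or the universal relation on A. -/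
def IsCostandardElement {L : Type*} [Lattice L] (x : L) : Prop :=
  ∀ y z : L, (x ⊓ y) ⊔ z = (x ⊔ z) ⊓ (y ⊔ z)

/-- The congruence lattice `Con(A)` of a `G`-set `A`: the sublattice of the lattice
`Setoid A` of all equivalence relations on `A` (where meet is intersection and join is
the transitive closure of the union) consisting of the equivalence relations compatible
with the action of `G`. -/
def gSetCongruences (G A : Type*) [Group G] [MulAction G A] : Sublattice (Setoid A) where
  carrier := {r : Setoid A | ∀ (g : G) (x y : A), r x y → r (g • x) (g • y)}
  supClosed' := by
    intro r hr s hs g x y hxy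
    rw [Setoid.sup_eq_eqvGen] at hxy ⊢
    induction hxy with
    | rel a b h => exact Relation.EqvGen.rel _ _ (h.imp (hr g a b) (hs g a b))
    | refl a => exact Relation.EqvGen.refl _
    | symm a b _ ih => exact Relation.EqvGen.symm _ _ ih
    | trans a b c _ _ ih1 ih2 => exact Relation.EqvGen.trans _ _ _ ih1 ih2
  infClosed' := by
    intro r hr s hs g x y hxy
    exact ⟨hr g x y hxy.1, hs g x y hxy.2⟩

/-- The congruence generated by a pair of points from different orbits. -/
def pairCong (G A : Type*) [Group G] [MulAction G A]
    (hstab : ∀ x y : A, MulAction.stabilizer G x = MulAction.stabilizer G y)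
    (p q : A) (hpq : ∀ g : G, g • p ≠ q) : gSetCongruences G A :=
  ⟨{ r := fun x y => x = y ∨ ∃ g : G, (x = g • p ∧ y = g • q) ∨ (x = g • q ∧ y = g • p)
     iseqv := by
      have key : ∀ (g k : G) (x y : A), g • x = k • x → g • y = k • y := by
        intro g k x y h
        have h1 : k⁻¹ * g ∈ MulAction.stabilizer G x := by
          rw [MulAction.mem_stabilizer_iff, mul_smul, h, inv_smul_smul]
        rw [hstab x y, MulAction.mem_stabilizer_iff, mul_smul, inv_smul_eq_iff] at h1
        exact h1
      have hne : ∀ g k : G, g • p ≠ k • q := by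
        intro g k h
        apply hpq (k⁻¹ * g)
        rw [mul_smul, h, inv_smul_smul]
      refine ⟨fun x => Or.inl rfl, ?_, ?_⟩
      · rintro x y (h | ⟨g, h | h⟩)
        · exact Or.inl h.symm
        · exact Or.inr ⟨g, Or.inr ⟨h.2, h.1⟩⟩
        · exact Or.inr ⟨g, Or.inl ⟨h.2, h.1⟩⟩
      · rintro x y z (rfl | ⟨g, ⟨rfl, rfl⟩ | ⟨rfl, rfl⟩⟩) h2
        · exact h2
        · rcases h2 with rfl | ⟨k, ⟨h, rfl⟩ | ⟨h, rfl⟩⟩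
          · exact Or.inr ⟨g, Or.inl ⟨rfl, rfl⟩⟩
          · exact absurd h.symm (hne _ _)
          · exact Or.inl (key _ _ _ _ h)
        · rcases h2 with rfl | ⟨k, ⟨h, rfl⟩ | ⟨h, rfl⟩⟩
          · exact Or.inr ⟨g, Or.inr ⟨rfl, rfl⟩⟩
          · exact Or.inl (key _ _ _ _ h)
          · exact absurd h (hne _ _) }, by
    rintro g x y (rfl | ⟨k, ⟨rfl, rfl⟩ | ⟨rfl, rfl⟩⟩)
    · exact Or.inl rfl
    · exact Or.inr ⟨g * k, Or.inl ⟨(mul_smul _ _ _).symm, (mul_smul _ _ _).symm⟩⟩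
    · exact Or.inr ⟨g * k, Or.inr ⟨(mul_smul _ _ _).symm, (mul_smul _ _ _).symm⟩⟩⟩

/-- The congruence collapsing everything outside the orbit of `a`. -/
def outCong (G A : Type*) [Group G] [MulAction G A] (a : A) : gSetCongruences G A :=
  ⟨{ r := fun x y => x = y ∨ ((∀ g : G, g • a ≠ x) ∧ (∀ g : G, g • a ≠ y))
     iseqv := by
      refine ⟨fun x => Or.inl rfl, ?_, ?_⟩
      · rintro x y (h | h)
        · exact Or.inl h.symm
        · exact Or.inr ⟨h.2, h.1⟩
      · rintro x y z (rfl | h) (rfl | h2)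
        · exact Or.inl rfl
        · exact Or.inr h2
        · exact Or.inr h
        · exact Or.inr ⟨h.1, h2.2⟩ }, by
    have key : ∀ (k : G) (x : A), (∀ g : G, g • a ≠ x) → ∀ g : G, g • a ≠ k • x := by
      intro k x h g hg
      apply h (k⁻¹ * g)
      rw [mul_smul, hg, inv_smul_smul]
    rintro g x y (rfl | h)
    · exact Or.inl rfl
    · exact Or.inr ⟨key g x h.1, key g y h.2⟩⟩

theorem costd_key (G A : Type*) [Group G] [MulAction G A]
    (hstab : ∀ x y : A, MulAction.stabilizer G x = MulAction.stabilizer G y)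
    (α : gSetCongruences G A) (hα : IsCostandardElement α)
    (p q : A) (hpq : ∀ g : G, g • p ≠ q) (hn : ¬ (α : Setoid A) p q)
    (z : gSetCongruences G A) (u : A)
    (h1 : (α : Setoid A) p u) (h2 : (z : Setoid A) u q) : (z : Setoid A) p q := by
  have hE := congrArg Subtype.val (hα (pairCong G A hstab p q hpq) z)
  simp only [Sublattice.coe_sup, Sublattice.coe_inf] at hE
  have hbot : (α : Setoid A) ⊓ (pairCong G A hstab p q hpq : Setoid A) = ⊥ := by
    rw [eq_bot_iff]
    have hback : ∀ g : G, ¬ (α : Setoid A) (g • p) (g • q) := by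
      intro g h
      have := α.2 g⁻¹ _ _ h
      rw [inv_smul_smul, inv_smul_smul] at this
      exact hn this
    rintro x y ⟨hx, (h | ⟨g, ⟨rfl, rfl⟩ | ⟨rfl, rfl⟩⟩)⟩
    · exact h
    · exact absurd hx (hback g)
    · exact absurd (Setoid.symm' _ hx) (hback g)
  rw [hbot, bot_sup_eq] at hE
  rw [hE]
  refine ⟨Setoid.trans' _ ((le_sup_left : (α : Setoid A) ≤ α ⊔ z) h1)
    ((le_sup_right : (z : Setoid A) ≤ α ⊔ z) h2), ?_⟩
  refine (le_sup_left : (pairCong G A hstab p q hpq : Setoid A) ≤ _ ⊔ z) ?_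
  exact Or.inr ⟨1, Or.inl ⟨(one_smul _ _).symm, (one_smul _ _).symm⟩⟩

/-- Let `G` be a group acting non-transitively on a set `A` such that the stabilizers of
any two points of `A` coincide. A congruence `α` on the `G`-set `A` is a costandard
element of the congruence lattice `Con(A)` if and only if `α` is the equality relation
(`⊥`) or the universal relation (`⊤`) on `A`. -/
theorem gSetCongruence_isCostandardElement_iff (G A : Type*) [Group G] [MulAction G A]
    (hnt : ¬ ∀ a b : A, ∃ g : G, g • a = b)
    (hstab : ∀ x y : A, MulAction.stabilizer G x = MulAction.stabilizer G y)
    (α : gSetCongruences G A) :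
    IsCostandardElement α ↔ ((α : Setoid A) = ⊥ ∨ (α : Setoid A) = ⊤) := by
  constructor
  · intro hα
    by_contra! hcon
    obtain ⟨hb, ht⟩ := hcon
    have hsymm : ∀ x y : A, (∀ g : G, g • x ≠ y) → ∀ g : G, g • y ≠ x := by
      intro x y h g hg
      apply h g⁻¹
      rw [← hg, inv_smul_smul]
    have main : ∀ a b c : A, (α : Setoid A) a b → (∀ g : G, g • a ≠ b) →
        (∀ g : G, g • a ≠ c) → (α : Setoid A) a c := by
      intro a b c hab ho hc
      by_contra hn
      rcases costd_key G A hstab α hα a c hc hn (outCong G A a) b hab (Or.inr ⟨ho, hc⟩) with h | h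
      · exact hc 1 (by rw [one_smul, h])
      · exact h.1 1 (one_smul _ _)
    by_cases hA : ∃ a b : A, (α : Setoid A) a b ∧ ∀ g : G, g • a ≠ b
    · obtain ⟨a, b, hab, ho⟩ := hA
      have hall : ∀ c, (α : Setoid A) a c := by
        intro c
        by_cases hc : ∀ g : G, g • a ≠ c
        · exact main a b c hab ho hc
        · push Not at hc
          obtain ⟨g, rfl⟩ := hc
          refine Setoid.trans' _ hab (main b a _ (Setoid.symm' _ hab) (hsymm _ _ ho) ?_)
          intro k hk
          apply hsymm _ _ ho (g⁻¹ * k)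
          rw [mul_smul, hk, inv_smul_smul]
      apply ht
      rw [eq_top_iff]
      intro x y _
      exact Setoid.trans' _ (Setoid.symm' _ (hall x)) (hall y)
    · push Not at hA
      apply hb
      rw [eq_bot_iff]
      intro a b hab
      by_contra hne
      have hne : a ≠ b := hne
      have hc : ∃ c : A, ∀ g : G, g • a ≠ c := by
        by_contra! hall
        apply hnt
        intro x y
        obtain ⟨g, rfl⟩ := hall x
        obtain ⟨k, rfl⟩ := hall y
        exact ⟨k * g⁻¹, by rw [mul_smul, inv_smul_smul]⟩
      obtain ⟨c, hc⟩ := hc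
      obtain ⟨h, rfl⟩ := hA a b hab
      have hc2 : ∀ g : G, g • (h • a) ≠ c := by
        intro g hg
        exact hc (g * h) (by rw [mul_smul, hg])
      have hn : ¬ (α : Setoid A) a c := by
        intro hac
        obtain ⟨g, hg⟩ := hA a c hac
        exact hc g hg
      rcases costd_key G A hstab α hα a c hc hn (pairCong G A hstab (h • a) c hc2) (h • a) hab
        (Or.inr ⟨1, Or.inl ⟨(one_smul _ _).symm, (one_smul _ _).symm⟩⟩) with h' | ⟨g, h' | h'⟩
      · exact hc 1 (by rw [one_smul, h'])
      · have hg : g ∈ MulAction.stabilizer G c := h'.2.symm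
        rw [hstab c (h • a)] at hg
        exact hne (h'.1.trans hg)
      · apply hsymm _ _ hc g
        exact h'.1.symm
  · intro h y z
    apply Subtype.ext
    simp only [Sublattice.coe_sup, Sublattice.coe_inf]
    rcases h with h | h
    · rw [h, bot_inf_eq, bot_sup_eq, eq_comm, inf_eq_left]
      exact le_sup_right
    · rw [h, top_inf_eq, top_sup_eq, top_inf_eq]
end
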